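/- (Vector Lipschitz constant, probit case, w-subproblem.) The gradient of f_w is Lipschitz continuous on ℝ^K with Lipschitz constant σ_max(C)² + μ; that is, for all x, y ∈ ℝ^K, ‖∇f_w(x) − ∇f_w(y)‖₂ ≤ (σ_max(C)² + μ)·‖x − y‖₂. -/

import Mathlib

/-!
Write `φ = stdN`, `Φ = PhiPro` and `r = φ / Φ`. Since `(-log Φ)' = -r`, the gradient of `fw` at `x` is
`-C v(x) + μ x` with `v(x) j = s j * r (s j * ⟪x, c j⟫)` and signs `s j = 2 * Y j - 1 = ±1`.
If `r` is `1`-Lipschitz, then `|v(x) j - v(y) j| ≤ |⟪x - y, c j⟫| = |(Cᵀ (x - y)) j|`, hence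
`‖C (v(x) - v(y))‖ ≤ ‖C‖ ‖Cᵀ (x - y)‖ ≤ ‖C‖² ‖x - y‖`.

That `r` is `1`-Lipschitz follows from `r' = -φ (tΦ + φ) / Φ²` and `0 ≤ φ (tΦ + φ) ≤ Φ²`. With
`G = tΦ + φ`, `H = (1 + t²)Φ + tφ` and `F = Φ² - tφΦ - φ²`, one has `G' = Φ`, `H' = 2G` and `F' = φH`,
and each of the three functions tends to `0` at `-∞`, so that successively `G`, `H` and `F` are
nondecreasing, hence nonnegative.
-/

open scoped RealInnerProductSpace

/-- The standard normal probability density function. -/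
noncomputable def stdN (x : ℝ) : ℝ := (Real.sqrt (2 * Real.pi))⁻¹ * Real.exp (-x ^ 2 / 2)

/-- The standard normal cumulative distribution function (inverse probit link). -/
noncomputable def PhiPro (x : ℝ) : ℝ := ∫ t in Set.Iic x, stdN t

/-! ### The normal density and distribution function -/

lemma stdN_pos (x : ℝ) : 0 < stdN x := by
  unfold stdN
  positivity

lemma stdN_eq_gaussianPDFReal : stdN = ProbabilityTheory.gaussianPDFReal 0 1 := by
  ext x
  simp [stdN, ProbabilityTheory.gaussianPDFReal]

lemma integrable_stdN : MeasureTheory.Integrable stdN := by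
  rw [stdN_eq_gaussianPDFReal]
  exact ProbabilityTheory.integrable_gaussianPDFReal 0 1

lemma continuous_stdN : Continuous stdN := by
  unfold stdN
  fun_prop

lemma hasDerivAt_stdN (x : ℝ) : HasDerivAt stdN (-x * stdN x) x := by
  have h : HasDerivAt (fun x : ℝ => -x ^ 2 / 2) (-x) x := by
    refine HasDerivAt.congr_deriv (((hasDerivAt_id x).pow 2).neg.div_const 2) ?_
    simp
    ring
  refine (h.exp.const_mul (Real.sqrt (2 * Real.pi))⁻¹).congr_deriv ?_
  unfold stdN
  ring

lemma hasDerivAt_PhiPro (x : ℝ) : HasDerivAt PhiPro (stdN x) x := by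
  have h : PhiPro = fun x => PhiPro 0 + ∫ t in (0 : ℝ)..x, stdN t := by
    ext x
    have := intervalIntegral.integral_Iic_sub_Iic (a := 0) (b := x)
      integrable_stdN.integrableOn integrable_stdN.integrableOn
    unfold PhiPro
    rw [← this]
    ring
  rw [h]
  exact (intervalIntegral.integral_hasDerivAt_right (integrable_stdN.intervalIntegrable)
    (continuous_stdN.stronglyMeasurableAtFilter _ _) continuous_stdN.continuousAt).const_add _

lemma PhiPro_nonneg (x : ℝ) : 0 ≤ PhiPro x :=
  MeasureTheory.integral_nonneg fun t => (stdN_pos t).le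

lemma PhiPro_pos (x : ℝ) : 0 < PhiPro x := by
  have h : StrictMono PhiPro := strictMono_of_deriv_pos fun x => by
    rw [(hasDerivAt_PhiPro x).deriv]
    exact stdN_pos x
  exact (PhiPro_nonneg (x - 1)).trans_lt (h (by linarith))

lemma PhiPro_eq_cdf : PhiPro = ProbabilityTheory.cdf (ProbabilityTheory.gaussianReal 0 1) := by
  ext x
  rw [ProbabilityTheory.cdf_eq_real, MeasureTheory.measureReal_def,
    ProbabilityTheory.gaussianReal_apply_eq_integral _ one_ne_zero, ENNReal.toReal_ofReal,
    PhiPro, stdN_eq_gaussianPDFReal]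
  rw [← stdN_eq_gaussianPDFReal]
  exact PhiPro_nonneg x

open Filter Topology

lemma tendsto_PhiPro_atBot : Tendsto PhiPro atBot (𝓝 0) := by
  rw [PhiPro_eq_cdf]
  exact ProbabilityTheory.tendsto_cdf_atBot _

/-! ### Decay at `-∞` -/

lemma tendsto_pow_mul_stdN_atBot (n : ℕ) : Tendsto (fun t => t ^ n * stdN t) atBot (𝓝 0) := by
  have h := (tendsto_rpow_abs_mul_exp_neg_mul_sq_cocompact (a := 1 / 2) (by norm_num) n).mono_left
    atBot_le_cocompact
  have h2 := h.const_mul (Real.sqrt (2 * Real.pi))⁻¹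
  rw [mul_zero] at h2
  refine squeeze_zero_norm (fun t => le_of_eq ?_) h2
  rw [Real.norm_eq_abs, abs_mul, abs_of_pos (stdN_pos t), abs_pow, Real.rpow_natCast, stdN]
  ring_nf

lemma tendsto_stdN_atBot : Tendsto stdN atBot (𝓝 0) := by
  simpa using tendsto_pow_mul_stdN_atBot 0

/-- On `(-∞, -1]` the function `φ - Φ` is nondecreasing, because `φ' = -t φ ≥ φ` there. -/
lemma PhiPro_le_stdN {x : ℝ} (hx : x ≤ -1) : PhiPro x ≤ stdN x := by
  have hd (t : ℝ) : HasDerivAt (fun t => stdN t - PhiPro t) (-t * stdN t - stdN t) t :=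
    (hasDerivAt_stdN t).sub (hasDerivAt_PhiPro t)
  have hm : MonotoneOn (fun t => stdN t - PhiPro t) (Set.Iic (-1)) := by
    refine monotoneOn_of_deriv_nonneg (convex_Iic _)
      (fun t _ => (hd t).continuousAt.continuousWithinAt)
      (fun t _ => (hd t).differentiableAt.differentiableWithinAt) fun t ht => ?_
    rw [(hd t).deriv]
    rw [interior_Iic, Set.mem_Iio] at ht
    nlinarith [stdN_pos t]
  have hl : Tendsto (fun t => stdN t - PhiPro t) atBot (𝓝 0) := by
    simpa using tendsto_stdN_atBot.sub tendsto_PhiPro_atBot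
  have := le_of_tendsto hl ((eventually_le_atBot x).mono fun t ht => hm (ht.trans hx) hx ht)
  linarith

lemma tendsto_pow_mul_PhiPro_atBot (n : ℕ) :
    Tendsto (fun t => t ^ n * PhiPro t) atBot (𝓝 0) := by
  have h := (tendsto_pow_mul_stdN_atBot n).norm
  rw [norm_zero] at h
  refine squeeze_zero_norm' ((eventually_le_atBot (-1)).mono fun t ht => ?_) h
  rw [norm_mul, norm_mul, Real.norm_of_nonneg (PhiPro_nonneg t),
    Real.norm_of_nonneg (stdN_pos t).le]
  gcongr
  exact PhiPro_le_stdN ht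

/-- A function with nonnegative derivative that vanishes at `-∞` is nonnegative. -/
lemma nonneg_of_hasDerivAt_of_tendsto {f f' : ℝ → ℝ} (hd : ∀ t, HasDerivAt f (f' t) t)
    (hf' : ∀ t, 0 ≤ f' t) (hl : Tendsto f atBot (𝓝 0)) (t : ℝ) : 0 ≤ f t :=
  (monotone_of_hasDerivAt_nonneg hd hf').le_of_tendsto hl t

/-! ### The ratio `φ / Φ` is `1`-Lipschitz -/

lemma mul_PhiPro_add_stdN_nonneg (t : ℝ) : 0 ≤ t * PhiPro t + stdN t := by
  refine nonneg_of_hasDerivAt_of_tendsto (f := fun t => t * PhiPro t + stdN t) (f' := PhiPro)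
    (fun t => ?_) PhiPro_nonneg ?_ t
  · refine HasDerivAt.congr_deriv (((hasDerivAt_id t).mul (hasDerivAt_PhiPro t)).add (hasDerivAt_stdN t)) ?_
    simp
  · simpa using (tendsto_pow_mul_PhiPro_atBot 1).add tendsto_stdN_atBot

lemma one_add_sq_mul_PhiPro_add_nonneg (t : ℝ) :
    0 ≤ (1 + t ^ 2) * PhiPro t + t * stdN t := by
  refine nonneg_of_hasDerivAt_of_tendsto (f := fun t => (1 + t ^ 2) * PhiPro t + t * stdN t)
    (f' := fun t => 2 * (t * PhiPro t + stdN t))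
    (fun t => ?_) (fun t => mul_nonneg zero_le_two (mul_PhiPro_add_stdN_nonneg t)) ?_ t
  · refine HasDerivAt.congr_deriv (((((hasDerivAt_id t).pow 2).const_add 1).mul (hasDerivAt_PhiPro t)).add
      ((hasDerivAt_id t).mul (hasDerivAt_stdN t))) ?_
    simp
    ring
  · simpa [add_mul] using (tendsto_PhiPro_atBot.add (tendsto_pow_mul_PhiPro_atBot 2)).add
      (tendsto_pow_mul_stdN_atBot 1)

lemma stdN_mul_le_PhiPro_sq (t : ℝ) :
    stdN t * (t * PhiPro t + stdN t) ≤ PhiPro t ^ 2 := by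
  rw [← sub_nonneg]
  refine nonneg_of_hasDerivAt_of_tendsto
    (f := fun t => PhiPro t ^ 2 - stdN t * (t * PhiPro t + stdN t))
    (f' := fun t => stdN t * ((1 + t ^ 2) * PhiPro t + t * stdN t))
    (fun t => ?_)
    (fun t => mul_nonneg (stdN_pos t).le (one_add_sq_mul_PhiPro_add_nonneg t)) ?_ t
  · refine HasDerivAt.congr_deriv (((hasDerivAt_PhiPro t).pow 2).sub ((hasDerivAt_stdN t).mul
      (((hasDerivAt_id t).mul (hasDerivAt_PhiPro t)).add (hasDerivAt_stdN t)))) ?_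
    simp
    ring
  · simpa using (tendsto_PhiPro_atBot.pow 2).sub (tendsto_stdN_atBot.mul
      ((tendsto_pow_mul_PhiPro_atBot 1).add tendsto_stdN_atBot))

lemma hasDerivAt_ratio (t : ℝ) : HasDerivAt (fun t => stdN t / PhiPro t)
    (-(stdN t * (t * PhiPro t + stdN t) / PhiPro t ^ 2)) t := by
  refine HasDerivAt.congr_deriv ((hasDerivAt_stdN t).div (hasDerivAt_PhiPro t) (PhiPro_pos t).ne') ?_
  ring

lemma abs_ratio_sub_le (a b : ℝ) :
    |stdN a / PhiPro a - stdN b / PhiPro b| ≤ |a - b| := by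
  have h := Convex.norm_image_sub_le_of_norm_hasDerivWithin_le (C := 1) (s := Set.univ)
    (fun t _ => (hasDerivAt_ratio t).hasDerivWithinAt) (fun t _ => ?_) convex_univ
    (Set.mem_univ b) (Set.mem_univ a)
  · simpa using h
  · have h0 := mul_nonneg (stdN_pos t).le (mul_PhiPro_add_stdN_nonneg t)
    rw [norm_neg, Real.norm_of_nonneg (by positivity)]
    exact div_le_one_of_le₀ (stdN_mul_le_PhiPro_sq t) (by positivity)

/-! ### The gradient and its Lipschitz constant -/

lemma hasGradientAt_objective {K N : ℕ} (s : Fin N → ℝ)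
    (c : Fin N → EuclideanSpace ℝ (Fin K)) (μ : ℝ) (x : EuclideanSpace ℝ (Fin K)) :
    HasGradientAt
      (fun w => -(∑ j, Real.log (PhiPro (s j * ⟪w, c j⟫))) + μ / 2 * ‖w‖ ^ 2)
      (-(∑ j, (s j * (stdN (s j * ⟪x, c j⟫) / PhiPro (s j * ⟪x, c j⟫))) • c j) + μ • x) x := by
  rw [hasGradientAt_iff_hasFDerivAt]
  have h1 (j : Fin N) : HasFDerivAt (fun w => Real.log (PhiPro (s j * ⟪w, c j⟫)))
      ((stdN (s j * ⟪x, c j⟫) / PhiPro (s j * ⟪x, c j⟫)) • s j • innerSL ℝ (c j)) x := by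
    have hin : HasFDerivAt (fun w : EuclideanSpace ℝ (Fin K) => s j * ⟪w, c j⟫)
        (s j • innerSL ℝ (c j)) x := by
      simp_rw [real_inner_comm (c j)]
      exact (innerSL ℝ (c j)).hasFDerivAt.const_mul (s j)
    exact ((hasDerivAt_PhiPro _).log (PhiPro_pos _).ne').comp_hasFDerivAt x hin
  have h2 := ((HasFDerivAt.fun_sum fun j (_ : j ∈ Finset.univ) => h1 j).neg).add
    ((hasStrictFDerivAt_norm_sq x).hasFDerivAt.const_mul (μ / 2))
  refine h2.congr_fderiv ?_
  ext v
  simp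
  congr 1
  · congr 1
    exact Finset.sum_congr rfl fun j _ => by ring
  · ring

/-- Vector Lipschitz constant, probit case, `w`-subproblem: the gradient of
`f_w(w) = -∑_j log Φ_pro((2Y_j - 1)⟨w, c_j⟩) + (μ/2)‖w‖²` is Lipschitz continuous on `ℝ^K`
with Lipschitz constant `σ_max(C)² + μ`, where `σ_max(C)` is the largest singular value
(the ℓ²-operator norm) of the `K × N` matrix `C` with columns `c_j`. -/
theorem stmt10 (K N : ℕ) (Y : Fin N → ℝ) (hY : ∀ j, Y j = 0 ∨ Y j = 1)
    (c : Fin N → EuclideanSpace ℝ (Fin K)) (μ : ℝ) (hμ : 0 < μ)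
    (fw : EuclideanSpace ℝ (Fin K) → ℝ)
    (hfw : ∀ w, fw w =
      -(∑ j, Real.log (PhiPro ((2 * Y j - 1) * ⟪w, c j⟫))) + μ / 2 * ‖w‖ ^ 2)
    (σmax : ℝ)
    (hσ : σmax = ‖LinearMap.toContinuousLinearMap
      (Matrix.toEuclideanLin (Matrix.of fun k j => c j k) :
        EuclideanSpace ℝ (Fin N) →ₗ[ℝ] EuclideanSpace ℝ (Fin K))‖) :
    ∀ x y : EuclideanSpace ℝ (Fin K),
      ‖gradient fw x - gradient fw y‖ ≤ (σmax ^ 2 + μ) * ‖x - y‖ := by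
  intro x y
  set s : Fin N → ℝ := fun j => 2 * Y j - 1 with hs
  have hs1 (j : Fin N) : |s j| = 1 := by
    rcases hY j with h | h <;> norm_num [hs, h]
  have hg (x) := ((funext hfw : fw = _) ▸ hasGradientAt_objective s c μ x).gradient
  set A := LinearMap.toContinuousLinearMap
      (Matrix.toEuclideanLin (Matrix.of fun k j => c j k) :
        EuclideanSpace ℝ (Fin N) →ₗ[ℝ] EuclideanSpace ℝ (Fin K)) with hA
  have hAv (v : EuclideanSpace ℝ (Fin N)) : A v = ∑ j, v j • c j := by
    ext k
    simp [hA, Matrix.toLpLin_apply, Matrix.mulVec, dotProduct, mul_comm]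
  have hAt (z : EuclideanSpace ℝ (Fin K)) (j : Fin N) :
      (ContinuousLinearMap.adjoint A z) j = ⟪z, c j⟫ := by
    have h := ContinuousLinearMap.adjoint_inner_left A (EuclideanSpace.single j (1 : ℝ)) z
    rw [hAv] at h
    simpa [EuclideanSpace.inner_single_right, Pi.single_apply, ite_smul] using h
  let v : EuclideanSpace ℝ (Fin K) → EuclideanSpace ℝ (Fin N) := fun x =>
    WithLp.toLp 2 fun j => s j * (stdN (s j * ⟪x, c j⟫) / PhiPro (s j * ⟪x, c j⟫))
  have hgv (x) : gradient fw x = -A (v x) + μ • x := by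
    rw [hg, hAv]
  have hv : ‖v x - v y‖ ≤ ‖ContinuousLinearMap.adjoint A (x - y)‖ := by
    rw [EuclideanSpace.norm_eq, EuclideanSpace.norm_eq]
    gcongr with j
    rw [hAt]
    calc ‖(v x - v y) j‖
        = |s j| * |stdN (s j * ⟪x, c j⟫) / PhiPro (s j * ⟪x, c j⟫)
            - stdN (s j * ⟪y, c j⟫) / PhiPro (s j * ⟪y, c j⟫)| := by
          rw [← abs_mul, mul_sub]
          rfl
      _ ≤ 1 * |s j * ⟪x, c j⟫ - s j * ⟪y, c j⟫| := by
          rw [hs1, one_mul, one_mul]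
          exact abs_ratio_sub_le _ _
      _ = ‖⟪x - y, c j⟫‖ := by
          rw [← mul_sub, abs_mul, hs1, inner_sub_left, Real.norm_eq_abs]
          ring
  calc ‖gradient fw x - gradient fw y‖
      = ‖-A (v x - v y) + μ • (x - y)‖ := by
        rw [hgv, hgv, map_sub, smul_sub]
        congr 1
        abel
    _ ≤ ‖A (v x - v y)‖ + μ * ‖x - y‖ := by
        refine (norm_add_le _ _).trans_eq ?_
        rw [norm_neg, norm_smul, Real.norm_of_nonneg hμ.le]
    _ ≤ ‖A‖ * (‖A‖ * ‖x - y‖) + μ * ‖x - y‖ := by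
        gcongr
        refine (A.le_opNorm _).trans ?_
        gcongr
        refine hv.trans (((ContinuousLinearMap.adjoint A).le_opNorm _).trans_eq ?_)
        rw [LinearIsometryEquiv.norm_map]
    _ = (σmax ^ 2 + μ) * ‖x - y‖ := by
        rw [hσ]
        ring
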